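/- Let g ≥ 1 be an integer. For every odd prime power q, the number of 2g-tuples (A_1,B_1,…,A_g,B_g) ∈ GL(2,F_q)^{2g} satisfying [A_1,B_1][A_2,B_2]⋯[A_g,B_g] = −I_2 equals (|GL(2,F_q)|/(q−1)) · (q−1)^{2g} · [ (q²−1)^{2g−2} + q^{2g−2}(q²−1)^{2g−2} − (1/2)·q^{2g−2}(q−1)^{2g−2} − (1/2)·q^{2g−2}(q+1)^{2g−2} ]. -/

import Mathlib

/-!
Write `G = GL₂(F)`, `q = |F|`, and let `f` be the sum of all commutators in the group algebra
`k[G]`, so that the solutions are counted by the coefficient of `f ^ g` at `-1`.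

For a nontrivial additive character `ψ` of `F`, let `e` be the idempotent of `k[G]` attached to `ψ`
on the unipotent group `{!![1, x; 0, 1]}`. Gelfand's trick with the anti-involution
`!![a, b; c, d] ↦ !![d, b; c, a]` shows that `e k[G] e` is commutative. The central element
`z = ∑ g, g e g⁻¹` does not depend on `ψ`, and commutativity gives `f e = z² e`. Hence `f - z²` is
killed by all `e`, so it is fixed by unipotent matrices, hence by `SL₂(F)`; this forces
`f ^ g = z ^ (2 g) + c J` with `J` the sum of the elements of `SL₂(F)` and
`c = |G| ^ (2 g) / |SL₂(F)|`.

In terms of characters, `z` acts by `|G| / χ(1)` on an irreducible representation of degree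
`χ(1) > 1`, which is `q`, `q + 1` or `q - 1`, and by `0` on the one-dimensional ones. The
corresponding quartic equation for `z` follows from the relations between double cosets of the
unipotent group. The coefficients of `1`, `z`, `z²`, `z³` at `-1` then determine those of all powers
of `z` by Lagrange interpolation.
-/

open scoped MatrixGroups

section GroupAlgebra

open MonoidAlgebra

variable {k G : Type*} [CommRing k] [Group G]

theorem mem_center_of_forall_of_mul_comm {c : MonoidAlgebra k G}
    (h : ∀ g, of k G g * c = c * of k G g) : c ∈ Subalgebra.center k (MonoidAlgebra k G) := by
  rw [Subalgebra.mem_center_iff]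
  intro x
  induction x using MonoidAlgebra.induction_on with
  | of g => exact h g
  | add x y hx hy => rw [add_mul, mul_add, hx, hy]
  | smul r x hx => rw [smul_mul_assoc, mul_smul_comm, hx]

variable [Fintype G]

variable (k G) in
/-- The conjugation sum `x ↦ ∑ g, g * x * g⁻¹` on the group algebra, a projection onto the center up
to the factor `|G|`. -/
noncomputable def conjSum : MonoidAlgebra k G →ₗ[k] MonoidAlgebra k G :=
  ∑ g : G, LinearMap.mulLeftRight k (of k G g, of k G g⁻¹)

theorem conjSum_apply (x : MonoidAlgebra k G) :
    conjSum k G x = ∑ g, of k G g * x * of k G g⁻¹ := by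
  simp [conjSum]

theorem conjSum_mem_center (x : MonoidAlgebra k G) :
    conjSum k G x ∈ Subalgebra.center k (MonoidAlgebra k G) := by
  refine mem_center_of_forall_of_mul_comm fun h => ?_
  rw [conjSum_apply, Finset.mul_sum, Finset.sum_mul]
  refine Fintype.sum_equiv (Equiv.mulLeft h) _ _ fun g => ?_
  rw [Equiv.coe_mulLeft, mul_inv_rev, mul_assoc _ _ (of k G h), ← map_mul, inv_mul_cancel_right,
    map_mul]
  simp only [mul_assoc]

theorem conjSum_conj (g : G) (x : MonoidAlgebra k G) :
    conjSum k G (of k G g * x * of k G g⁻¹) = conjSum k G x := by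
  rw [conjSum_apply, conjSum_apply]
  refine Fintype.sum_equiv (Equiv.mulRight g) _ _ fun h => ?_
  simp only [Equiv.coe_mulRight, mul_inv_rev, map_mul, mul_assoc]

theorem conjSum_mul_comm (x y : MonoidAlgebra k G) :
    conjSum k G (x * y) = conjSum k G (y * x) := by
  induction y using MonoidAlgebra.induction_on with
  | of g =>
    rw [← conjSum_conj g (x * _), mul_assoc, mul_assoc, ← map_mul, mul_inv_cancel, map_one, mul_one]
  | add y z hy hz => rw [mul_add, add_mul, map_add, map_add, hy, hz]
  | smul r y hy => rw [mul_smul_comm, smul_mul_assoc, map_smul, map_smul, hy]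

theorem conjSum_center_mul {c : MonoidAlgebra k G}
    (hc : c ∈ Subalgebra.center k (MonoidAlgebra k G)) (x : MonoidAlgebra k G) :
    conjSum k G (c * x) = c * conjSum k G x := by
  rw [Subalgebra.mem_center_iff] at hc
  simp only [conjSum_apply, Finset.mul_sum, ← mul_assoc, hc]

theorem conjSum_one : conjSum k G 1 = (Nat.card G : MonoidAlgebra k G) := by
  simp [conjSum_apply, ← one_def]

theorem coeff_conjSum_of_mem_center {c : G} (hc : c ∈ Subgroup.center G) (x : MonoidAlgebra k G) :
    (conjSum k G x).coeff c = Nat.card G * x.coeff c := by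
  have hconj (g : G) : g⁻¹ * c * g = c := by
    rw [mul_assoc, ← Subgroup.mem_center_iff.mp hc g, inv_mul_cancel_left]
  simp [conjSum_apply, coeff_mul_single_apply, coeff_single_mul_apply, ← mul_assoc, hconj]

theorem sum_apply_mul_of_eq_sum_apply_of_inv_mul {M : Type*} [AddCommMonoid M] [Module k M]
    (β : MonoidAlgebra k G →ₗ[k] MonoidAlgebra k G →ₗ[k] M) (x : MonoidAlgebra k G) :
    ∑ g, β (x * of k G g) (of k G g⁻¹) = ∑ g, β (of k G g) (of k G g⁻¹ * x) := by
  induction x using MonoidAlgebra.induction_on with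
  | of h =>
    refine Fintype.sum_equiv (Equiv.mulLeft h) _ _ fun g => ?_
    simp
  | add x y hx hy => simp only [add_mul, mul_add, map_add, LinearMap.add_apply,
      Finset.sum_add_distrib, hx, hy]
  | smul r x hx => simp only [smul_mul_assoc, mul_smul_comm, map_smul, LinearMap.smul_apply,
      ← Finset.smul_sum, hx]

variable (k G) in
/-- The sum in the group algebra of the commutators of all pairs of elements; the coefficients of
its powers count the factorizations of group elements into commutators. -/
noncomputable def commutatorSum : MonoidAlgebra k G :=
  ∑ g : G, ∑ h : G, of k G (g * h * g⁻¹ * h⁻¹)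

theorem commutatorSum_eq_sum_mul_conjSum :
    commutatorSum k G = ∑ g, of k G g * conjSum k G (of k G g⁻¹) := by
  simp only [commutatorSum, conjSum_apply, Finset.mul_sum, ← map_mul, mul_assoc]

theorem commutatorSum_mem_center :
    commutatorSum k G ∈ Subalgebra.center k (MonoidAlgebra k G) := by
  refine mem_center_of_forall_of_mul_comm fun x => ?_
  simp only [commutatorSum, Finset.mul_sum, Finset.sum_mul, ← map_mul]
  refine Fintype.sum_equiv (MulAut.conj x).toEquiv _ _ fun g =>
    Fintype.sum_equiv (MulAut.conj x).toEquiv _ _ fun h => ?_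
  simp [mul_assoc]

theorem coeff_commutatorSum_pow (m : ℕ) (z : G) :
    (commutatorSum k G ^ m).coeff z = Nat.card {p : (Fin m → G) × (Fin m → G) //
      (List.ofFn fun i => p.1 i * p.2 i * (p.1 i)⁻¹ * (p.2 i)⁻¹).prod = z} := by
  classical
  have hpow : commutatorSum k G ^ m = ∑ p : (Fin m → G) × (Fin m → G),
      of k G (List.ofFn fun i => p.1 i * p.2 i * (p.1 i)⁻¹ * (p.2 i)⁻¹).prod := by
    induction m with
    | zero => simp [one_def]
    | succ m ih =>
      rw [pow_succ', ih, commutatorSum, ← Fintype.sum_prod_type', Finset.sum_mul_sum,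
        ← Fintype.sum_prod_type']
      refine Fintype.sum_equiv ((Equiv.prodProdProdComm _ _ _ _).trans
        (Equiv.prodCongr (Fin.consEquiv fun _ => G) (Fin.consEquiv fun _ => G))) _ _ ?_
      rintro ⟨⟨a, b⟩, p, q⟩
      simp [List.ofFn_succ, Fin.consEquiv]
  rw [hpow, Nat.card_eq_fintype_card, Fintype.card_subtype, ← Finset.sum_boole]
  simp only [of_apply, coeff_sum, Finsupp.finsetSum_apply, coeff_single, Finsupp.single_apply]

theorem conjSum_corner_mul {e : MonoidAlgebra k G} (he : IsIdempotentElem e)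
    (hcomm : ∀ x y, Commute (e * x * e) (e * y * e)) (x : MonoidAlgebra k G) :
    conjSum k G (e * x * e) * e = e * x * e * conjSum k G e := by
  have hT (y : MonoidAlgebra k G) := Subalgebra.mem_center_iff.mp (conjSum_mem_center y) e
  calc conjSum k G (e * x * e) * e = e * conjSum k G (e * x * e) * e := by
        rw [hT, mul_assoc _ e, he]
    _ = ∑ g, (e * of k G g * e) * (e * x * e) * of k G g⁻¹ * e := by
        simp only [conjSum_apply, Finset.mul_sum, Finset.sum_mul, mul_assoc, he.mul_self_mul]
    _ = ∑ g, (e * x * e) * (e * of k G g * e) * of k G g⁻¹ * e := by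
        simp only [(hcomm _ _).eq]
    _ = e * x * e * (conjSum k G e * e) := by
        simp only [conjSum_apply, Finset.mul_sum, Finset.sum_mul, mul_assoc, he.mul_self_mul]
    _ = e * x * e * conjSum k G e := by
        rw [← hT, ← mul_assoc, mul_assoc _ e e, he]

theorem commutatorSum_mul_eq_conjSum_sq_mul {e : MonoidAlgebra k G} (he : IsIdempotentElem e)
    (hcomm : ∀ x y, Commute (e * x * e) (e * y * e)) :
    commutatorSum k G * e = conjSum k G e ^ 2 * e := by
  have hT (y : MonoidAlgebra k G) := Subalgebra.mem_center_iff.mp (conjSum_mem_center y)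
  have hcasimir := sum_apply_mul_of_eq_sum_apply_of_inv_mul
    ((LinearMap.mul k (MonoidAlgebra k G)).compl₁₂ (LinearMap.mulRight k e) (conjSum k G)) e
  simp only [LinearMap.compl₁₂_apply, LinearMap.mulRight_apply, LinearMap.mul_apply'] at hcasimir
  have hcorner (y : MonoidAlgebra k G) : conjSum k G (y * e) = conjSum k G (e * y * e) := by
    rw [mul_assoc, conjSum_mul_comm e, mul_assoc, he]
  calc commutatorSum k G * e = e * commutatorSum k G * e := by
        rw [Subalgebra.mem_center_iff.mp commutatorSum_mem_center, mul_assoc _ e, he]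
    _ = ∑ g, e * of k G g * e * conjSum k G (of k G g⁻¹) := by
        simp only [commutatorSum_eq_sum_mul_conjSum, Finset.mul_sum, Finset.sum_mul, mul_assoc,
          ← hT]
    _ = ∑ g, of k G g * (conjSum k G (e * of k G g⁻¹ * e) * e) := by
        rw [hcasimir]
        exact Finset.sum_congr rfl fun g _ => by rw [hcorner, mul_assoc, hT]
    _ = (∑ g, of k G g * e * of k G g⁻¹) * e * conjSum k G e := by
        simp only [conjSum_corner_mul he hcomm, Finset.sum_mul]
        simp only [mul_assoc]
    _ = conjSum k G e ^ 2 * e := by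
        rw [← conjSum_apply, mul_assoc, hT, ← mul_assoc, sq]

end GroupAlgebra

section Gelfand

open MonoidAlgebra

variable {k G : Type*} [CommSemiring k] [Monoid G]

theorem commute_corner_of_antihom (σ : G →* Gᵐᵒᵖ) {e : MonoidAlgebra k G}
    (he : IsIdempotentElem e)
    (hσe : MonoidAlgebra.lift k (MonoidAlgebra k G)ᵐᵒᵖ G ((of k G).op.comp σ) e = .op e)
    (hσ : ∀ g, e * of k G (σ g).unop * e = e * of k G g * e) (x y : MonoidAlgebra k G) :
    Commute (e * x * e) (e * y * e) := by
  set τ := MonoidAlgebra.lift k (MonoidAlgebra k G)ᵐᵒᵖ G ((of k G).op.comp σ)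
  have hτ (x : MonoidAlgebra k G) : e * (τ x).unop * e = e * x * e := by
    induction x using MonoidAlgebra.induction_on with
    | of g => simpa [τ] using hσ g
    | add x y hx hy => simp only [map_add, MulOpposite.unop_add, mul_add, add_mul, hx, hy]
    | smul r x hx =>
      simp only [map_smul, MulOpposite.unop_smul, mul_smul_comm, smul_mul_assoc, hx]
  have hfix (x : MonoidAlgebra k G) : τ (e * x * e) = .op (e * x * e) := by
    rw [map_mul, map_mul, hσe, mul_assoc]
    exact congrArg MulOpposite.op (hτ x)
  have hprod : e * x * e * (e * y * e) = e * (x * e * y) * e := by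
    simp only [mul_assoc, he.mul_self_mul]
  apply MulOpposite.op_injective
  rw [hprod, ← hfix, ← hprod, map_mul, hfix, hfix, ← MulOpposite.op_mul]

end Gelfand

section CharSum

open MonoidAlgebra

variable {A k G : Type*} [AddCommGroup A] [Fintype A] [Group G]

section CommRing

variable [CommRing k]

/-- The element `∑ a, ψ (-a) • u a` of the group algebra of `G` attached to a homomorphism `u` from
an additive group `A` to `G` and an additive character `ψ` of `A`. Multiplication by `u a` acts on
it by the scalar `ψ a`. -/
noncomputable def charSum (u : AddChar A G) (ψ : AddChar A k) : MonoidAlgebra k G :=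
  ∑ a, ψ (-a) • of k G (u a)

variable (u : AddChar A G) (ψ : AddChar A k)

theorem of_mul_charSum (a : A) : of k G (u a) * charSum u ψ = ψ a • charSum u ψ := by
  simp only [charSum, Finset.mul_sum, Finset.smul_sum, mul_smul_comm, ← map_mul,
    ← AddChar.map_add_eq_mul, smul_smul]
  exact Fintype.sum_equiv (Equiv.addLeft a) _ _ fun b => by simp

theorem charSum_mul_of (a : A) : charSum u ψ * of k G (u a) = ψ a • charSum u ψ := by
  simp only [charSum, Finset.sum_mul, Finset.smul_sum, smul_mul_assoc, ← map_mul,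
    ← AddChar.map_add_eq_mul, smul_smul]
  exact Fintype.sum_equiv (Equiv.addRight a) _ _ fun b => by simp

theorem charSum_mul_self : charSum u ψ * charSum u ψ = (Fintype.card A : k) • charSum u ψ := by
  nth_rewrite 1 [charSum]
  simp only [Finset.sum_mul, smul_mul_assoc, of_mul_charSum, smul_smul, ← AddChar.map_add_eq_mul,
    neg_add_cancel, AddChar.map_zero_eq_one, one_smul, Finset.sum_const, Finset.card_univ,
    Nat.cast_smul_eq_nsmul]

theorem charSum_mul_of_mul_mul_of_mul_charSum (s t : A) (g : G) :
    charSum u ψ * of k G (u s * g * u t) * charSum u ψ =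
      ψ (s + t) • (charSum u ψ * of k G g * charSum u ψ) := by
  rw [map_mul, map_mul, ← mul_assoc, ← mul_assoc, charSum_mul_of, mul_assoc _ (of k _ _),
    of_mul_charSum]
  simp only [smul_mul_assoc, mul_smul_comm, smul_smul, AddChar.map_add_eq_mul, mul_comm]

end CommRing

theorem sum_charSum (u : AddChar A G) :
    ∑ ψ : AddChar A ℂ, charSum u ψ = (Fintype.card A : ℂ) • 1 := by
  classical
  simp only [charSum]
  rw [Finset.sum_comm]
  simp only [← Finset.sum_smul, AddChar.sum_apply_eq_ite, neg_eq_zero, ite_smul, zero_smul,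
    Finset.sum_ite_eq', Finset.mem_univ, if_true, AddChar.map_zero_eq_one, map_one]

variable [Field k]

/-- The normalization of `charSum u ψ` to an idempotent. -/
noncomputable def charIdempotent (u : AddChar A G) (ψ : AddChar A k) : MonoidAlgebra k G :=
  (Fintype.card A : k)⁻¹ • charSum u ψ

theorem isIdempotentElem_charIdempotent [CharZero k] (u : AddChar A G) (ψ : AddChar A k) :
    IsIdempotentElem (charIdempotent u ψ) := by
  rw [IsIdempotentElem, charIdempotent, smul_mul_smul_comm, charSum_mul_self, smul_smul, mul_assoc,
    inv_mul_cancel₀, mul_one]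
  exact Nat.cast_ne_zero.mpr Fintype.card_ne_zero

end CharSum

section SubgroupSum

open MonoidAlgebra

variable {k G : Type*} [CommRing k] [Group G]

variable (k) in
/-- The sum of the elements of a subgroup in the group algebra. -/
noncomputable def subgroupSum (H : Subgroup G) [Fintype H] : MonoidAlgebra k G := ∑ h : H, of k G h

theorem of_mul_subgroupSum {H : Subgroup G} [Fintype H] {h : G} (hh : h ∈ H) :
    of k G h * subgroupSum k H = subgroupSum k H := by
  simp only [subgroupSum, Finset.mul_sum, ← map_mul]
  exact Fintype.sum_equiv (Equiv.mulLeft ⟨h, hh⟩) _ _ fun _ => rfl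

theorem mul_subgroupSum_eq {H : Subgroup G} [Fintype H] {x : MonoidAlgebra k G}
    (hx : ∀ h ∈ H, x * of k G h = x) : x * subgroupSum k H = (Nat.card H : k) • x := by
  simp only [subgroupSum, Finset.mul_sum, hx _ (SetLike.coe_mem _), Finset.sum_const,
    Finset.card_univ, Nat.card_eq_fintype_card, Nat.cast_smul_eq_nsmul]

theorem coeff_subgroupSum {H : Subgroup G} [Fintype H] {h : G} (hh : h ∈ H) :
    (subgroupSum k H).coeff h = 1 := by
  classical
  simp only [subgroupSum, coeff_sum, Finsupp.finsetSum_apply, of_apply, coeff_single,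
    Finsupp.single_apply]
  rw [Finset.sum_eq_single ⟨h, hh⟩] <;> aesop

end SubgroupSum

theorem sum_eq_add_sum_units {G₀ M : Type*} [GroupWithZero G₀] [Fintype G₀] [DecidableEq G₀]
    [AddCommMonoid M] (f : G₀ → M) : ∑ x, f x = f 0 + ∑ x : G₀ˣ, f x := by
  rw [Fintype.sum_eq_add_sum_subtype_ne f 0,
    ← Equiv.sum_comp (unitsEquivNeZero (G₀ := G₀)) fun x => f x]
  rfl

theorem linearMap_aeval_eq_mul_sum {K A ι : Type*} [Field K] [Ring A] [Algebra K A]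
    [DecidableEq ι] {s : Finset ι} {v : ι → K} (hv : Set.InjOn v s) {a : A}
    (ha : Polynomial.aeval a (Lagrange.nodal s v) = 0) (L : A →ₗ[K] K)
    (hL : ∀ i < s.card - 1, L (a ^ i) = 0) (p : Polynomial K) :
    L (Polynomial.aeval a p) =
      L (a ^ (s.card - 1)) * ∑ i ∈ s, p.eval (v i) / ∏ j ∈ s.erase i, (v i - v j) := by
  set r := p %ₘ Lagrange.nodal s v
  have hpr : p = r + Lagrange.nodal s v * (p /ₘ Lagrange.nodal s v) :=
    (Polynomial.modByMonic_add_div p _).symm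
  have hdeg : r.degree < s.card := by
    rw [← Lagrange.degree_nodal (v := v)]
    exact Polynomial.degree_modByMonic_lt p (Lagrange.nodal_monic)
  have heval : ∀ i ∈ s, p.eval (v i) = r.eval (v i) := fun i hi => by
    rw [hpr, Polynomial.eval_add, Polynomial.eval_mul, Lagrange.eval_nodal_at_node hi, zero_mul,
      add_zero]
  have haeval : Polynomial.aeval a p = Polynomial.aeval a r := by
    rw [hpr, map_add, map_mul, ha, zero_mul, add_zero]
  have hnatDegree : r.natDegree < s.card - 1 + 1 :=
    Nat.lt_succ_of_le <| Polynomial.natDegree_le_iff_coeff_eq_zero.mpr fun N hN =>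
      Polynomial.coeff_eq_zero_of_degree_lt (hdeg.trans_le (by exact_mod_cast (by lia)))
  rw [haeval, Finset.sum_congr rfl fun i hi => by rw [heval i hi],
    ← Lagrange.coeff_eq_sum hv hdeg, Polynomial.aeval_eq_sum_range' hnatDegree,
    Finset.sum_range_succ, map_add, map_sum, map_smul, smul_eq_mul, mul_comm,
    Finset.sum_eq_zero fun i hi => by rw [map_smul, hL i (Finset.mem_range.mp hi), smul_zero],
    zero_add]

section GL2

open Matrix.GeneralLinearGroup (upperRightHom mkOfDetNeZero)

variable {F : Type*} [Field F]

theorem ext_fin_two {g h : GL (Fin 2) F} (h₀₀ : g 0 0 = h 0 0) (h₀₁ : g 0 1 = h 0 1)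
    (h₁₀ : g 1 0 = h 1 0) (h₁₁ : g 1 1 = h 1 1) : g = h := by
  ext i j
  fin_cases i <;> fin_cases j <;> assumption

theorem det_fin_two_ne_zero (g : GL (Fin 2) F) : g 0 0 * g 1 1 - g 0 1 * g 1 0 ≠ 0 := by
  simpa [Matrix.det_fin_two] using g.det_ne_zero

theorem neg_one_mem_center : (-1 : GL (Fin 2) F) ∈ Subgroup.center (GL (Fin 2) F) :=
  Subgroup.mem_center_iff.mpr fun g => by rw [mul_neg_one, neg_one_mul]

theorem eq_upperRightHom_mul_mul_upperRightHom {g h : GL (Fin 2) F} (hdet : g.det = h.det)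
    (hg : g 1 0 ≠ 0) (hgh : h 1 0 = g 1 0) :
    h = upperRightHom ((h 0 0 - g 0 0) / g 1 0) * g * upperRightHom ((h 1 1 - g 1 1) / g 1 0) := by
  have hdet' : g 0 0 * g 1 1 - g 0 1 * g 1 0 = h 0 0 * h 1 1 - h 0 1 * h 1 0 := by
    simpa [Units.ext_iff, Matrix.det_fin_two] using hdet
  rw [hgh] at hdet'
  refine ext_fin_two ?_ ?_ ?_ ?_ <;>
    simp [Matrix.mul_apply, Matrix.vecMul, dotProduct, hgh] <;> field_simp
  · ring
  · linear_combination hdet'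
  · ring

theorem mul_upperRightHom {g : GL (Fin 2) F} (hg : g 1 0 = 0) (x : F) :
    g * upperRightHom x = upperRightHom (g 0 0 * x / g 1 1) * g := by
  have hdet := det_fin_two_ne_zero g
  rw [hg, mul_zero, sub_zero] at hdet
  have hd := right_ne_zero_of_mul hdet
  apply ext_fin_two <;> simp [Matrix.mul_apply, hg, hd, add_comm]

/-- The matrix `!![0, -c⁻¹; c, 0]`, which represents the matrices of determinant `1` with lower left
entry `c` modulo multiplication by unipotent upper triangular matrices on both sides. -/
def weyl (c : Fˣ) : GL (Fin 2) F := mkOfDetNeZero !![0, -(c : F)⁻¹; (c : F), 0] (by simp)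

/-- The diagonal matrix of determinant `1` with upper left entry `t`. -/
def torus (t : Fˣ) : GL (Fin 2) F := mkOfDetNeZero !![(t : F), 0; 0, (t : F)⁻¹] (by simp)

theorem mem_of_det_eq_one {N : Subgroup (GL (Fin 2) F)} [hN : N.Normal]
    (hu : ∀ x, upperRightHom x ∈ N) {g : GL (Fin 2) F} (hg : g.det = 1) : g ∈ N := by
  have hlower (x : F) : ∃ l ∈ N, l 0 0 = 1 ∧ l 0 1 = 0 ∧ l 1 0 = x ∧ l 1 1 = 1 := by
    refine ⟨_, hN.conj_mem _ (hu (-x)) (weyl 1), ?_⟩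
    simp [Matrix.mul_apply, weyl, mkOfDetNeZero, Matrix.inv_def, Matrix.adjugate_fin_two]
  have hne {h : GL (Fin 2) F} (hh : h.det = 1) (hh₁₀ : h 1 0 ≠ 0) : h ∈ N := by
    obtain ⟨l, hl, h₀₀, h₀₁, h₁₀, h₁₁⟩ := hlower (h 1 0)
    have hdet : l.det = h.det := by
      simp [hh, Units.ext_iff, Matrix.det_fin_two, h₀₀, h₀₁, h₁₁]
    rw [eq_upperRightHom_mul_mul_upperRightHom hdet (by rwa [h₁₀]) h₁₀.symm]
    exact N.mul_mem (N.mul_mem (hu _) hl) (hu _)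
  by_cases hg₁₀ : g 1 0 = 0
  · obtain ⟨l, hl, h₀₀, h₀₁, h₁₀, h₁₁⟩ := hlower 1
    have hdet := det_fin_two_ne_zero g
    rw [hg₁₀, mul_zero, sub_zero] at hdet
    rw [← N.mul_mem_cancel_right hl]
    refine hne ?_ ?_
    · simp [hg, Units.ext_iff, Matrix.det_fin_two, h₀₀, h₀₁, h₁₁]
    · simp [Matrix.mul_apply, hg₁₀, h₁₀, right_ne_zero_of_mul hdet]
  · exact hne hg hg₁₀

variable (F) in
/-- The anti-involution `!![a, b; c, d] ↦ !![d, b; c, a]`, the transposition along the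
antidiagonal. It fixes the unipotent upper triangular matrices. -/
def antiTranspose : GL (Fin 2) F →* (GL (Fin 2) F)ᵐᵒᵖ where
  toFun g := .op (mkOfDetNeZero !![g 1 1, g 0 1; g 1 0, g 0 0]
    (by simpa [mul_comm (g 1 1)] using det_fin_two_ne_zero g))
  map_one' := by
    rw [MulOpposite.op_eq_one_iff]
    apply ext_fin_two <;> simp [mkOfDetNeZero]
  map_mul' g h := by
    rw [← MulOpposite.op_mul, MulOpposite.op_inj]
    apply ext_fin_two <;> simp [mkOfDetNeZero, Matrix.mul_apply] <;> ring

variable (F) in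
/-- The subgroup `SL₂(F)` of `GL₂(F)`. -/
abbrev detKer : Subgroup (GL (Fin 2) F) := Matrix.GeneralLinearGroup.det.ker

variable {k : Type*} [Fintype F]

section Card

variable [CommRing k]

local notation "q" => (Fintype.card F : k)

theorem card_GL_two : (Nat.card (GL (Fin 2) F) : k) = q * (q - 1) ^ 2 * (q + 1) := by
  have hq : 1 ≤ Fintype.card F := Fintype.card_pos
  have hq2 : Fintype.card F ≤ Fintype.card F ^ 2 := Nat.le_self_pow two_ne_zero _
  rw [Matrix.card_GL_field (𝔽 := F) 2, Fin.prod_univ_two]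
  simp only [Fin.val_zero, Fin.val_one, pow_zero, pow_one, Nat.cast_mul, Nat.cast_pow, Nat.cast_one,
    Nat.cast_sub hq2, Nat.cast_sub (hq.trans hq2)]
  ring

theorem card_GL_two_eq_mul_card_detKer :
    (Nat.card (GL (Fin 2) F) : k) = (q - 1) * Nat.card (detKer F) := by
  rw [← (detKer F).card_mul_index, Subgroup.index_ker,
    MonoidHom.range_eq_top.mpr Matrix.GeneralLinearGroup.det_surjective, Subgroup.card_top,
    Nat.card_units, Nat.card_eq_fintype_card (α := F), Nat.cast_mul, Nat.cast_pred
      Fintype.card_pos, mul_comm]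

theorem card_upperTriangular :
    (Nat.card {g : GL (Fin 2) F // g 1 0 = 0} : k) = q * (q - 1) ^ 2 := by
  have hdiag (g : {g : GL (Fin 2) F // g 1 0 = 0}) : g.1 0 0 ≠ 0 ∧ g.1 1 1 ≠ 0 := by
    have := det_fin_two_ne_zero g.1
    rwa [g.2, mul_zero, sub_zero, mul_ne_zero_iff] at this
  let e : {g : GL (Fin 2) F // g 1 0 = 0} ≃ F × Fˣ × Fˣ :=
    { toFun := fun g => (g.1 0 1, .mk0 _ (hdiag g).1, .mk0 _ (hdiag g).2)
      invFun := fun p => ⟨mkOfDetNeZero !![(p.2.1 : F), p.1; 0, (p.2.2 : F)] (by simp),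
        by simp [mkOfDetNeZero]⟩
      left_inv := fun g => Subtype.ext <| by
        apply ext_fin_two <;> simp [mkOfDetNeZero, g.2]
      right_inv := fun p => by simp [mkOfDetNeZero] }
  rw [Nat.card_congr e, Nat.card_prod, Nat.card_prod, Nat.card_units, Nat.card_eq_fintype_card,
    Nat.cast_mul, Nat.cast_mul, Nat.cast_pred Fintype.card_pos, sq]

theorem card_not_upperTriangular :
    (Nat.card {g : GL (Fin 2) F // ¬ g 1 0 = 0} : k) = q ^ 2 * (q - 1) ^ 2 := by
  classical
  have h := card_GL_two (F := F) (k := k)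
  rw [← Nat.card_congr (Equiv.sumCompl fun g : GL (Fin 2) F => g 1 0 = 0), Nat.card_sum,
    Nat.cast_add, card_upperTriangular] at h
  linear_combination h

theorem card_sub_one_ne_zero [CharZero k] : q - 1 ≠ 0 :=
  sub_ne_zero.mpr (Nat.cast_ne_one.mpr Fintype.one_lt_card.ne')

end Card

end GL2

section Whittaker

open MonoidAlgebra
open Matrix.GeneralLinearGroup (upperRightHom mkOfDetNeZero)

variable {F k : Type*} [Field F] [Fintype F]

section IsDomain

variable [CommRing k] [IsDomain k]

theorem charSum_mul_of_mul_eq_zero {ψ : AddChar F k} (hψ : ψ ≠ 1) {g : GL (Fin 2) F}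
    (hg : g 1 0 = 0) (hne : g 0 0 ≠ g 1 1) :
    charSum upperRightHom ψ * of k _ g * charSum upperRightHom ψ = 0 := by
  obtain ⟨y, hy⟩ := AddChar.ne_one_iff.mp hψ
  have hd : g 1 1 ≠ 0 := fun hd =>
    det_fin_two_ne_zero g (by rw [hg, hd, mul_zero, mul_zero, sub_zero])
  have hsub : g 1 1 - g 0 0 ≠ 0 := sub_ne_zero.mpr hne.symm
  set x := y * g 1 1 / (g 1 1 - g 0 0)
  have hx : -(g 0 0 * x / g 1 1) + x = y := by simp only [x]; field_simp; ring
  have hfix : upperRightHom (-(g 0 0 * x / g 1 1)) * g * upperRightHom x = g := by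
    rw [mul_assoc, mul_upperRightHom hg, ← mul_assoc, ← AddChar.map_add_eq_mul, neg_add_cancel,
      AddChar.map_zero_eq_one, one_mul]
  have heigen := charSum_mul_of_mul_mul_of_mul_charSum upperRightHom ψ (-(g 0 0 * x / g 1 1)) x g
  rw [hfix, hx, eq_comm, ← sub_eq_zero] at heigen
  exact (smul_eq_zero.mp ((sub_smul _ _ _).trans (by rwa [one_smul]))).resolve_left
    (sub_ne_zero.mpr hy)

theorem charSum_mul_antiTranspose_mul {ψ : AddChar F k} (hψ : ψ ≠ 1) (g : GL (Fin 2) F) :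
    charSum upperRightHom ψ * of k _ (antiTranspose F g).unop * charSum upperRightHom ψ =
      charSum upperRightHom ψ * of k _ g * charSum upperRightHom ψ := by
  by_cases hg : g 1 0 = 0
  · by_cases heq : g 0 0 = g 1 1
    · congr 3
      apply ext_fin_two <;> simp [antiTranspose, mkOfDetNeZero, heq]
    · rw [charSum_mul_of_mul_eq_zero hψ hg heq, charSum_mul_of_mul_eq_zero hψ]
      · simpa [antiTranspose, mkOfDetNeZero] using hg
      · simpa [antiTranspose, mkOfDetNeZero] using Ne.symm heq
  · rw [eq_upperRightHom_mul_mul_upperRightHom (g := g) (h := (antiTranspose F g).unop) _ hg,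
      charSum_mul_of_mul_mul_of_mul_charSum]
    · have hsum : (g 1 1 - g 0 0) / g 1 0 + (g 0 0 - g 1 1) / g 1 0 = 0 := by ring
      simp [antiTranspose, mkOfDetNeZero, hsum]
    · simp [antiTranspose, mkOfDetNeZero]
    · simp [antiTranspose, mkOfDetNeZero, Units.ext_iff, Matrix.det_fin_two, mul_comm]

end IsDomain

variable [Field k]

theorem commute_charIdempotent_corner [CharZero k] {ψ : AddChar F k} (hψ : ψ ≠ 1)
    (x y : MonoidAlgebra k (GL (Fin 2) F)) :
    Commute (charIdempotent upperRightHom ψ * x * charIdempotent upperRightHom ψ)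
      (charIdempotent upperRightHom ψ * y * charIdempotent upperRightHom ψ) := by
  refine commute_corner_of_antihom (antiTranspose F) (isIdempotentElem_charIdempotent _ _) ?_ ?_ x y
  · have hu (a : F) : (antiTranspose F) (upperRightHom a) = .op (upperRightHom a) := by
      rw [← MulOpposite.unop_inj]
      apply ext_fin_two <;> simp [antiTranspose, mkOfDetNeZero]
    simp only [charIdempotent, charSum, map_smul, map_sum, lift_of, MonoidHom.comp_apply, hu,
      MulOpposite.op_smul, Finset.op_sum, MonoidHom.op_apply_apply, MulOpposite.unop_op,
      Function.comp_apply]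
  · intro g
    simp only [charIdempotent, smul_mul_assoc, mul_smul_comm, charSum_mul_antiTranspose_mul hψ]

variable [DecidableEq F]

theorem conjSum_of_upperRightHom {x : F} (hx : x ≠ 0) :
    conjSum k (GL (Fin 2) F) (of k _ (upperRightHom x)) =
      conjSum k (GL (Fin 2) F) (of k _ (upperRightHom 1)) := by
  have hconj : upperRightHom x = mkOfDetNeZero !![x, 0; 0, 1] (by simpa) * upperRightHom 1 *
      (mkOfDetNeZero !![x, 0; 0, 1] (by simpa))⁻¹ := by
    rw [eq_mul_inv_iff_mul_eq]
    apply ext_fin_two <;> simp [mkOfDetNeZero, Matrix.mul_apply]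
  rw [hconj, map_mul (of k _), map_mul (of k _), conjSum_conj]

variable (F k) in
/-- The central element `∑ g, g * e * g⁻¹`, where `e` is the idempotent attached to a nontrivial
character of the unipotent upper triangular matrices. The definition does not mention the
character; see `conjSum_charIdempotent`. -/
noncomputable def whittakerElement : MonoidAlgebra k (GL (Fin 2) F) :=
  (Fintype.card F : k)⁻¹ •
    ((Nat.card (GL (Fin 2) F) : MonoidAlgebra k _) - conjSum k _ (of k _ (upperRightHom 1)))

theorem whittakerElement_mem_center :
    whittakerElement F k ∈ Subalgebra.center k (MonoidAlgebra k (GL (Fin 2) F)) :=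
  Subalgebra.smul_mem _ (sub_mem (natCast_mem _ _) (conjSum_mem_center _)) _

theorem conjSum_charSum_upperRightHom (ψ : AddChar F k) :
    conjSum k (GL (Fin 2) F) (charSum upperRightHom ψ) =
      (Nat.card (GL (Fin 2) F) : MonoidAlgebra k _) +
        (∑ x, ψ x - 1) • conjSum k _ (of k _ (upperRightHom 1)) := by
  have hsum : ∑ x, ψ x - 1 = ∑ x ∈ Finset.univ.erase 0, ψ (-x) := by
    rw [← Equiv.sum_comp (Equiv.neg F), ← Finset.add_sum_erase _ _ (Finset.mem_univ 0)]
    simp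
  rw [charSum, map_sum, ← Finset.add_sum_erase _ _ (Finset.mem_univ 0), hsum, Finset.sum_smul,
    neg_zero, AddChar.map_zero_eq_one, AddChar.map_zero_eq_one, map_one, one_smul, conjSum_one]
  congr 1
  refine Finset.sum_congr rfl fun x hx => ?_
  rw [map_smul, conjSum_of_upperRightHom (Finset.ne_of_mem_erase hx)]

theorem conjSum_charIdempotent {ψ : AddChar F k} (hψ : ψ ≠ 1) :
    conjSum k (GL (Fin 2) F) (charIdempotent upperRightHom ψ) = whittakerElement F k := by
  rw [charIdempotent, map_smul, conjSum_charSum_upperRightHom, AddChar.sum_eq_zero_of_ne_one hψ,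
    whittakerElement, zero_sub, neg_one_smul, ← sub_eq_add_neg]

theorem commutatorSum_mul_charSum [CharZero k] {ψ : AddChar F k} (hψ : ψ ≠ 1) :
    commutatorSum k (GL (Fin 2) F) * charSum upperRightHom ψ =
      whittakerElement F k ^ 2 * charSum upperRightHom ψ := by
  have hq : (Fintype.card F : k) ≠ 0 := Nat.cast_ne_zero.mpr Fintype.card_ne_zero
  have h := commutatorSum_mul_eq_conjSum_sq_mul (isIdempotentElem_charIdempotent _ _)
    (commute_charIdempotent_corner hψ)
  rw [conjSum_charIdempotent hψ, charIdempotent, mul_smul_comm, mul_smul_comm] at h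
  exact smul_right_injective _ (inv_ne_zero hq) h

theorem commutatorSum_mul_subgroupSum :
    commutatorSum k (GL (Fin 2) F) * subgroupSum k (detKer F) =
      (Nat.card (GL (Fin 2) F) : k) ^ 2 • subgroupSum k (detKer F) := by
  have hmem (g h : GL (Fin 2) F) : g * h * g⁻¹ * h⁻¹ ∈ detKer F := by simp [MonoidHom.mem_ker]
  simp only [commutatorSum, Finset.sum_mul, of_mul_subgroupSum (hmem _ _), Finset.sum_const,
    Finset.card_univ, Nat.card_eq_fintype_card, sq, ← Nat.cast_smul_eq_nsmul k, smul_smul]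

theorem whittakerElement_mul_subgroupSum :
    whittakerElement F k * subgroupSum k (detKer F) = 0 := by
  have hmem (g : GL (Fin 2) F) : g * upperRightHom 1 * g⁻¹ ∈ detKer F := by
    simp [MonoidHom.mem_ker, mul_comm, Units.ext_iff]
  simp only [whittakerElement, conjSum_apply, smul_mul_assoc, sub_mul, Finset.sum_mul, ← map_mul,
    of_mul_subgroupSum (hmem _)]
  simp

end Whittaker

section CommutatorSum

open MonoidAlgebra
open Matrix.GeneralLinearGroup (upperRightHom)

variable {F : Type*} [Field F]

theorem mul_of_eq_self_of_det_eq_one {k : Type*} [CommRing k] {x : MonoidAlgebra k (GL (Fin 2) F)}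
    (hxc : x ∈ Subalgebra.center k (MonoidAlgebra k (GL (Fin 2) F)))
    (hx : ∀ y, x * of k _ (upperRightHom y) = x) {g : GL (Fin 2) F} (hg : g.det = 1) :
    x * of k _ g = x := by
  rw [Subalgebra.mem_center_iff] at hxc
  let N : Subgroup (GL (Fin 2) F) :=
    { carrier := {h | x * of k _ h = x}
      one_mem' := by simp only [Set.mem_ofPred_eq, map_one, mul_one]
      mul_mem' := fun {a b} ha hb => by
        rw [Set.mem_ofPred_eq, map_mul, ← mul_assoc, Set.mem_ofPred_eq.mp ha, hb]
      inv_mem' := fun {a} (ha : x * of k _ a = x) => by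
        calc x * of k _ a⁻¹ = x * of k _ a * of k _ a⁻¹ := by rw [ha]
          _ = x := by rw [mul_assoc, ← map_mul, mul_inv_cancel, map_one, mul_one] }
  have hN : N.Normal := ⟨fun a (ha : x * of k _ a = x) b => by
    change x * of k _ (b * a * b⁻¹) = x
    rw [map_mul, map_mul, ← mul_assoc, ← mul_assoc, ← hxc, mul_assoc (of k _ b), ha, hxc, mul_assoc,
      ← map_mul, mul_inv_cancel, map_one, mul_one]⟩
  exact mem_of_det_eq_one (N := N) hx hg

variable [Fintype F]

theorem mul_of_upperRightHom_eq_self {x : MonoidAlgebra ℂ (GL (Fin 2) F)}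
    (hx : ∀ ψ : AddChar F ℂ, ψ ≠ 1 → x * charSum upperRightHom ψ = 0) (y : F) :
    x * of ℂ _ (upperRightHom y) = x := by
  have hq : (Fintype.card F : ℂ) ≠ 0 := Nat.cast_ne_zero.mpr Fintype.card_ne_zero
  have hone : (Fintype.card F : ℂ) • x = x * charSum upperRightHom 1 := by
    rw [← mul_one x, ← mul_smul_comm, ← sum_charSum upperRightHom, Finset.mul_sum,
      Fintype.sum_eq_single 1 hx, mul_one]
  apply smul_right_injective _ hq
  beta_reduce
  rw [← smul_mul_assoc, hone, mul_assoc, charSum_mul_of, AddChar.one_apply, one_smul]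

variable [DecidableEq F]

theorem commutatorSum_eq :
    commutatorSum ℂ (GL (Fin 2) F) = whittakerElement F ℂ ^ 2 +
      (Nat.card (GL (Fin 2) F) ^ 2 / Nat.card (detKer F) : ℂ) • subgroupSum ℂ (detKer F) := by
  set x := commutatorSum ℂ (GL (Fin 2) F) - whittakerElement F ℂ ^ 2
  have hxc : x ∈ Subalgebra.center ℂ _ :=
    sub_mem commutatorSum_mem_center (pow_mem whittakerElement_mem_center 2)
  have hx (g) (hg : g ∈ detKer F) : x * of ℂ _ g = x :=
    mul_of_eq_self_of_det_eq_one hxc (mul_of_upperRightHom_eq_self fun ψ hψ => by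
      rw [sub_mul, commutatorSum_mul_charSum hψ, sub_self]) hg
  have hxJ : x * subgroupSum ℂ (detKer F) =
      (Nat.card (GL (Fin 2) F) : ℂ) ^ 2 • subgroupSum ℂ (detKer F) := by
    rw [sub_mul, commutatorSum_mul_subgroupSum, sq (whittakerElement F ℂ), mul_assoc,
      whittakerElement_mul_subgroupSum, mul_zero, sub_zero]
  have hcard : (Nat.card (detKer F) : ℂ) ≠ 0 := Nat.cast_ne_zero.mpr Nat.card_pos.ne'
  rw [← sub_eq_iff_eq_add', div_eq_inv_mul, ← smul_smul, ← hxJ, mul_subgroupSum_eq hx, smul_smul,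
    inv_mul_cancel₀ hcard, one_smul]

theorem commutatorSum_pow {m : ℕ} (hm : 1 ≤ m) :
    commutatorSum ℂ (GL (Fin 2) F) ^ m = whittakerElement F ℂ ^ (2 * m) +
      (Nat.card (GL (Fin 2) F) ^ (2 * m) / Nat.card (detKer F) : ℂ) • subgroupSum ℂ (detKer F) := by
  induction m, hm using Nat.le_induction with
  | base => rw [pow_one, mul_one, commutatorSum_eq]
  | succ m hm ih =>
    have hz : whittakerElement F ℂ ^ (2 * m) * subgroupSum ℂ (detKer F) = 0 := by
      rw [← Nat.succ_pred_eq_of_ne_zero (show 2 * m ≠ 0 by lia), pow_succ, mul_assoc,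
        whittakerElement_mul_subgroupSum, mul_zero]
    have hJ : subgroupSum ℂ (detKer F) * commutatorSum ℂ (GL (Fin 2) F) =
        (Nat.card (GL (Fin 2) F) : ℂ) ^ 2 • subgroupSum ℂ (detKer F) := by
      rw [Subalgebra.mem_center_iff.mp commutatorSum_mem_center, commutatorSum_mul_subgroupSum]
    have hzf : whittakerElement F ℂ ^ (2 * m) * commutatorSum ℂ (GL (Fin 2) F) =
        whittakerElement F ℂ ^ (2 * (m + 1)) := by
      rw [commutatorSum_eq, mul_add, mul_smul_comm, hz, smul_zero, add_zero, ← pow_add, mul_add_one]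
    rw [pow_succ, ih, add_mul, hzf, smul_mul_assoc, hJ, smul_smul, div_mul_eq_mul_div,
      ← pow_add, ← mul_add_one]

end CommutatorSum

section Hecke

open MonoidAlgebra
open Matrix.GeneralLinearGroup (upperRightHom mkOfDetNeZero)

variable {F k : Type*} [Field F] [Fintype F] [CommRing k]

variable (F k) in
/-- The sum in the group algebra of the unipotent upper triangular matrices. -/
noncomputable abbrev unipotentSum : MonoidAlgebra k (GL (Fin 2) F) :=
  charSum upperRightHom (1 : AddChar F k)

variable (F k) in
/-- The sum in the group algebra of the matrices `!![0, -c⁻¹; c, 0]`. -/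
noncomputable def weylSum [DecidableEq F] : MonoidAlgebra k (GL (Fin 2) F) :=
  ∑ c : Fˣ, of k _ (weyl c)

variable (F k) in
/-- The sum in the group algebra of the diagonal matrices of determinant `1`. -/
noncomputable def torusSum [DecidableEq F] : MonoidAlgebra k (GL (Fin 2) F) :=
  ∑ t : Fˣ, of k _ (torus t)

local notation "q" => (Fintype.card F : k)
local notation "E" => unipotentSum F k
local notation "W" => weylSum F k
local notation "D" => torusSum F k

theorem unipotentSum_eq_sum : E = ∑ x, of k _ (upperRightHom x) := by
  simp [charSum]

theorem unipotentSum_mul_of_mul {g : GL (Fin 2) F} (hg : g.det = 1) {c : Fˣ} (hc : g 1 0 = c) :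
    E * of k _ g * E = E * of k _ (weyl c) * E := by
  rw [eq_upperRightHom_mul_mul_upperRightHom (g := weyl c) (h := g),
    charSum_mul_of_mul_mul_of_mul_charSum, AddChar.one_apply, one_smul]
  · simp [hg, weyl, mkOfDetNeZero, Units.ext_iff, Matrix.det_fin_two]
  · simp [weyl, mkOfDetNeZero]
  · simp [weyl, mkOfDetNeZero, hc]

theorem of_mul_unipotentSum {g : GL (Fin 2) F} (hg : g 1 0 = 0) :
    of k _ g * E = E * of k _ g := by
  have hdet := det_fin_two_ne_zero g
  rw [hg, mul_zero, sub_zero] at hdet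
  have hratio : g 0 0 / g 1 1 ≠ 0 :=
    div_ne_zero (left_ne_zero_of_mul hdet) (right_ne_zero_of_mul hdet)
  simp only [unipotentSum_eq_sum, Finset.mul_sum, Finset.sum_mul, ← map_mul, mul_upperRightHom hg,
    mul_div_right_comm _ _ (g 1 1)]
  exact Equiv.sum_comp (Equiv.mulLeft₀ _ hratio) fun x => of k _ (upperRightHom x * g)

theorem unipotentSum_mul_of_mul_unipotentSum_mul_of_inv_of_eq_zero {g : GL (Fin 2) F}
    (hg : g 1 0 = 0) : E * of k _ g * E * of k _ g⁻¹ * E = q ^ 2 • E := by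
  rw [mul_assoc _ (of k _ g), of_mul_unipotentSum hg, ← mul_assoc, mul_assoc _ (of k _ g),
    ← map_mul, mul_inv_cancel, map_one, mul_one, charSum_mul_self, smul_mul_assoc,
    charSum_mul_self, smul_smul, sq]

theorem coeff_neg_one_unipotentSum (hF : ringChar F ≠ 2) : (E).coeff (-1) = 0 := by
  classical
  have hne (x : F) : (upperRightHom x : GL (Fin 2) F) ≠ -1 := fun h => by
    have h₀₀ := congrArg (fun g : GL (Fin 2) F => g 0 0) h
    exact Ring.neg_one_ne_one_of_char_ne_two hF (by simpa using h₀₀.symm)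
  simp only [unipotentSum_eq_sum, coeff_sum, Finsupp.finsetSum_apply, of_apply, coeff_single,
    Finsupp.single_apply, if_neg (hne _), Finset.sum_const_zero]

variable [DecidableEq F]

theorem unipotentSum_mul_of_mul_unipotentSum_mul_of_mul {g h : GL (Fin 2) F}
    (hdet : (g * h).det = 1) (hg : g 1 0 ≠ 0) (hgh : (g * h) 1 0 = 0) :
    E * of k _ g * E * of k _ h * E =
      E * of k _ (g * h) * E + E * W * E := by
  have hentry : g 1 0 * h 0 0 + g 1 1 * h 1 0 = 0 := by
    simpa [Matrix.mul_apply] using hgh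
  have hh : h 1 0 ≠ 0 := fun hh => det_fin_two_ne_zero h <| by
    have hh₀₀ : h 0 0 = 0 := by simpa [hh, hg] using hentry
    rw [hh, hh₀₀, zero_mul, mul_zero, sub_zero]
  have hterm (x : Fˣ) : E * of k _ (g * upperRightHom (x : F) * h) * E =
      E * of k _ (weyl (x * (Units.mk0 _ hg * Units.mk0 _ hh))) * E := by
    refine unipotentSum_mul_of_mul ?_ ?_
    · have hdet_u : (upperRightHom (x : F)).det = 1 := by simp [Units.ext_iff]
      rw [map_mul, map_mul, hdet_u, mul_one, ← map_mul, hdet]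
    · simp only [Matrix.GeneralLinearGroup.upperRightHom_apply, Units.val_mul, Matrix.mul_apply,
        Matrix.of_apply, Matrix.cons_val', Matrix.cons_val_fin_one, Fin.sum_univ_two,
        Matrix.cons_val_zero, Matrix.cons_val_one, mul_one, Units.val_mk0]
      linear_combination hentry
  have hexp : E * of k _ g * E * of k _ h * E =
      ∑ x : F, E * of k _ (g * upperRightHom x * h) * E := by
    nth_rewrite 2 [unipotentSum_eq_sum]
    simp only [Finset.mul_sum, Finset.sum_mul, map_mul, mul_assoc]
  rw [hexp, sum_eq_add_sum_units, AddChar.map_zero_eq_one, mul_one]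
  simp only [hterm, weylSum, Finset.mul_sum, Finset.sum_mul]
  exact congrArg (_ + ·) <| Equiv.sum_comp (Equiv.mulRight (Units.mk0 _ hg * Units.mk0 _ hh))
    fun c => E * of k _ (weyl c) * E

theorem unipotentSum_mul_torusSum : E * D = D * E := by
  simp only [torusSum, Finset.mul_sum, Finset.sum_mul]
  exact Finset.sum_congr rfl fun t _ => (of_mul_unipotentSum (by simp [torus, mkOfDetNeZero])).symm

theorem weylSum_mul_torusSum : W * D = (q - 1) • W := by
  have hmul (c t : Fˣ) : (weyl c : GL (Fin 2) F) * torus t = weyl (c * t) := by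
    apply ext_fin_two <;> simp [torus, weyl, mkOfDetNeZero, Matrix.mul_apply, mul_comm]
  have hsum (t : Fˣ) : W * of k _ (torus t) = W := by
    simp only [weylSum, Finset.sum_mul, ← map_mul, hmul]
    exact Equiv.sum_comp (Equiv.mulRight t) fun c => of k _ (weyl c)
  nth_rewrite 1 [torusSum]
  simp only [Finset.mul_sum, hsum, Finset.sum_const, Finset.card_univ, Fintype.card_units,
    ← Nat.cast_smul_eq_nsmul k, Nat.cast_pred Fintype.card_pos]

theorem unipotentSum_mul_weylSum_sq :
    E * W * E * W * E = (q - 1) • (E * D * E) + (q - 1) ^ 2 • (E * W * E) := by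
  have hmul (c d : Fˣ) : (weyl c : GL (Fin 2) F) * weyl d = torus (-d * c⁻¹) := by
    apply ext_fin_two <;> simp [torus, weyl, mkOfDetNeZero, Matrix.mul_apply, mul_comm]
  have hsum (c : Fˣ) : ∑ d : Fˣ, of k (GL (Fin 2) F) (torus (-d * c⁻¹)) = D :=
    Equiv.sum_comp ((Equiv.neg Fˣ).trans (Equiv.mulRight c⁻¹)) fun t => of k _ (torus t)
  have hterm (c d : Fˣ) : E * of k _ (weyl c) * E * of k _ (weyl d) * E =
      E * of k _ (torus (-d * c⁻¹)) * E + E * W * E := by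
    rw [unipotentSum_mul_of_mul_unipotentSum_mul_of_mul, hmul] <;>
      simp [weyl, mkOfDetNeZero, Units.ext_iff, Matrix.det_fin_two]
  have hexp : E * W * E * W * E =
      ∑ c : Fˣ, ∑ d : Fˣ, E * of k _ (weyl c) * E * of k _ (weyl d) * E := by
    simp only [weylSum, Finset.mul_sum, Finset.sum_mul]
    exact Finset.sum_comm
  simp only [hexp, hterm, Finset.sum_add_distrib, ← Finset.sum_mul, ← Finset.mul_sum, hsum]
  simp only [Finset.sum_const, Finset.card_univ, Fintype.card_units,
    ← Nat.cast_smul_eq_nsmul k, Nat.cast_pred Fintype.card_pos, smul_smul, smul_mul_assoc, sq]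

theorem unipotentSum_mul_of_mul_unipotentSum_mul_of_inv {g : GL (Fin 2) F} (hg : g 1 0 ≠ 0) :
    E * of k _ g * E * of k _ g⁻¹ * E = q • E + E * W * E := by
  rw [unipotentSum_mul_of_mul_unipotentSum_mul_of_mul (by simp) hg (by simp), mul_inv_cancel,
    map_one, mul_one, charSum_mul_self]

theorem coeff_neg_one_unipotentSum_mul_weylSum_mul :
    (E * W * E).coeff (-1) = 0 := by
  have hne (x y : F) (c : Fˣ) : upperRightHom x * weyl c * upperRightHom y ≠ -1 := fun h => by
    simpa [Matrix.mul_apply, weyl, mkOfDetNeZero] using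
      congrArg (fun g : GL (Fin 2) F => g 1 0) h
  simp only [unipotentSum_eq_sum, weylSum, Finset.sum_mul, Finset.mul_sum, ← map_mul]
  simp only [coeff_sum, Finsupp.finsetSum_apply, of_apply, coeff_single, Finsupp.single_apply,
    if_neg (hne _ _ _), Finset.sum_const_zero]

theorem coeff_neg_one_unipotentSum_mul_torusSum_mul :
    (E * D * E).coeff (-1) = q := by
  have hiff (t : Fˣ) (x : F) : torus t * upperRightHom x = -1 ↔ t = -1 ∧ x = 0 := by
    constructor
    · intro h
      have h₀₀ := congrArg (fun g : GL (Fin 2) F => g 0 0) h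
      have h₀₁ := congrArg (fun g : GL (Fin 2) F => g 0 1) h
      constructor
      · simpa [Matrix.mul_apply, torus, mkOfDetNeZero] using h₀₀
      · simpa [Matrix.mul_apply, torus, mkOfDetNeZero] using h₀₁
    · rintro ⟨rfl, rfl⟩
      apply ext_fin_two <;> simp [torus, mkOfDetNeZero]
  rw [unipotentSum_mul_torusSum, mul_assoc, charSum_mul_self, mul_smul_comm, torusSum,
    ← unipotentSum, unipotentSum_eq_sum, Finset.sum_mul_sum]
  simp only [← map_mul]
  simp only [coeff_smul, coeff_sum, Finsupp.smul_apply, Finsupp.finsetSum_apply,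
    of_apply, coeff_single, Finsupp.single_apply, hiff, ite_and]
  simp

end Hecke

section Eigenvalue

variable {F k : Type*} [Field F] [Fintype F] [Field k]

local notation "q" => (Fintype.card F : k)

variable (F k) in
/-- The eigenvalues `|G| / χ(1)` of `whittakerElement F k` on the irreducible representations of
`G = GL₂(F)` of degree `χ(1) = q`, `q + 1`, `q - 1`, in this order after the eigenvalue `0` on the
one-dimensional ones. -/
def whittakerEigenvalue : Fin 4 → k :=
  ![0, (q - 1) ^ 2 * (q + 1), q * (q - 1) ^ 2, q * (q - 1) * (q + 1)]

variable [CharZero k]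

theorem whittakerEigenvalue_injective : Function.Injective (whittakerEigenvalue F k) := by
  have hq : q ≠ 0 := Nat.cast_ne_zero.mpr Fintype.card_ne_zero
  have hq' : q - 1 ≠ 0 := card_sub_one_ne_zero
  have hq'' : q + 1 ≠ 0 := Nat.cast_add_one_ne_zero _
  intro i j hij
  fin_cases i <;> fin_cases j <;> simp [whittakerEigenvalue] at hij ⊢
  all_goals grind

theorem sum_whittakerEigenvalue_pow_div_prod (m : ℕ) :
    ∑ i, whittakerEigenvalue F k i ^ (m + 1) /
        ∏ j ∈ Finset.univ.erase i, (whittakerEigenvalue F k i - whittakerEigenvalue F k j) =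
      (whittakerEigenvalue F k 2 ^ m / (2 * q * (q - 1)) +
        whittakerEigenvalue F k 3 ^ m / (2 * q * (q + 1)) -
        whittakerEigenvalue F k 1 ^ m / (q ^ 2 - 1)) / (q - 1) ^ 2 := by
  have hq : q ≠ 0 := Nat.cast_ne_zero.mpr Fintype.card_ne_zero
  have hq' : q - 1 ≠ 0 := card_sub_one_ne_zero
  have hq'' : q + 1 ≠ 0 := Nat.cast_add_one_ne_zero _
  have hprod₁ : ∏ j ∈ Finset.univ.erase 1, (whittakerEigenvalue F k 1 - whittakerEigenvalue F k j) =
      -(whittakerEigenvalue F k 1 * ((q ^ 2 - 1) * (q - 1) ^ 2)) := by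
    rw [show (Finset.univ.erase 1 : Finset (Fin 4)) = {0, 2, 3} from rfl,
      Finset.prod_insert (by simp), Finset.prod_insert (by simp), Finset.prod_singleton]
    simp only [whittakerEigenvalue, Matrix.cons_val]
    ring
  have hprod₂ : ∏ j ∈ Finset.univ.erase 2, (whittakerEigenvalue F k 2 - whittakerEigenvalue F k j) =
      whittakerEigenvalue F k 2 * (2 * q * (q - 1) * (q - 1) ^ 2) := by
    rw [show (Finset.univ.erase 2 : Finset (Fin 4)) = {0, 1, 3} from rfl,
      Finset.prod_insert (by simp), Finset.prod_insert (by simp), Finset.prod_singleton]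
    simp only [whittakerEigenvalue, Matrix.cons_val]
    ring
  have hprod₃ : ∏ j ∈ Finset.univ.erase 3, (whittakerEigenvalue F k 3 - whittakerEigenvalue F k j) =
      whittakerEigenvalue F k 3 * (2 * q * (q + 1) * (q - 1) ^ 2) := by
    rw [show (Finset.univ.erase 3 : Finset (Fin 4)) = {0, 1, 2} from rfl,
      Finset.prod_insert (by simp), Finset.prod_insert (by simp), Finset.prod_singleton]
    simp only [whittakerEigenvalue, Matrix.cons_val]
    ring
  have hsq : q ^ 2 - 1 = (q - 1) * (q + 1) := by ring
  rw [Fin.sum_univ_four, hprod₁, hprod₂, hprod₃, hsq]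
  simp only [whittakerEigenvalue, Matrix.cons_val, zero_pow m.succ_ne_zero, zero_div]
  field_simp
  ring

end Eigenvalue

section MinimalPolynomial

open MonoidAlgebra
open Matrix.GeneralLinearGroup (upperRightHom)

variable {F k : Type*} [Field F] [Fintype F] [DecidableEq F] [Field k]

local notation "q" => (Fintype.card F : k)
local notation "E" => unipotentSum F k
local notation "W" => weylSum F k
local notation "D" => torusSum F k
local notation "z" => whittakerElement F k

theorem card_smul_conjSum_unipotentSum_mul :
    q • (conjSum k _ E * E) = (q ^ 2 * (q - 1) ^ 2) • ((2 * q) • E + E * W * E) := by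
  have hcenter := Subalgebra.mem_center_iff.mp (conjSum_mem_center E)
  calc q • (conjSum k _ E * E) = E * conjSum k _ E * E := by
        rw [hcenter, mul_assoc, charSum_mul_self, mul_smul_comm]
    _ = ∑ g, E * of k _ g * E * of k _ g⁻¹ * E := by
        simp only [conjSum_apply, Finset.mul_sum, Finset.sum_mul, mul_assoc]
    _ = (Nat.card {g : GL (Fin 2) F // g 1 0 = 0} : k) • (q ^ 2 • E) +
          (Nat.card {g : GL (Fin 2) F // ¬ g 1 0 = 0} : k) • (q • E + E * W * E) := by
        rw [← Fintype.sum_subtype_add_sum_subtype fun g : GL (Fin 2) F => g 1 0 = 0]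
        simp only [fun g : {g : GL (Fin 2) F // g 1 0 = 0} =>
            unipotentSum_mul_of_mul_unipotentSum_mul_of_inv_of_eq_zero (k := k) g.2,
          fun g : {g : GL (Fin 2) F // ¬ g 1 0 = 0} =>
            unipotentSum_mul_of_mul_unipotentSum_mul_of_inv (k := k) g.2, Finset.sum_const,
          Finset.card_univ, Nat.card_eq_fintype_card, Nat.cast_smul_eq_nsmul]
    _ = (q ^ 2 * (q - 1) ^ 2) • ((2 * q) • E + E * W * E) := by
        rw [card_upperTriangular, card_not_upperTriangular]
        module

variable [CharZero k]

theorem conjSum_unipotentSum : conjSum k _ E =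
    (q * Nat.card (GL (Fin 2) F)) • 1 - (q * (q - 1)) • z := by
  have hq : q ≠ 0 := Nat.cast_ne_zero.mpr Fintype.card_ne_zero
  rw [conjSum_charSum_upperRightHom, whittakerElement, smul_smul, mul_right_comm,
    mul_inv_cancel₀ hq, one_mul, ← nsmul_one (Nat.card _), ← Nat.cast_smul_eq_nsmul k]
  simp only [AddChar.one_apply, Finset.sum_const, Finset.card_univ, nsmul_one]
  module

theorem whittakerElement_mul_unipotentSum :
    z * E = (q * (q - 1) ^ 2) • E - (q - 1) • (E * W * E) := by
  have hq : q ≠ 0 := Nat.cast_ne_zero.mpr Fintype.card_ne_zero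
  have h := card_smul_conjSum_unipotentSum_mul (F := F) (k := k)
  rw [conjSum_unipotentSum, card_GL_two, sub_mul, smul_mul_assoc, smul_mul_assoc, one_mul] at h
  apply smul_right_injective _ (mul_ne_zero (pow_ne_zero 2 hq) (card_sub_one_ne_zero (F := F)))
  beta_reduce
  linear_combination (norm := module) (-1 : k) • h

theorem whittakerElement_mul_unipotentSum_mul_weylSum_mul :
    z * (E * W * E) =
      (q * (q - 1) ^ 2 - (q - 1) ^ 3) • (E * W * E) - (q - 1) ^ 2 • (E * D * E) := by
  simp only [← mul_assoc, whittakerElement_mul_unipotentSum, sub_mul, smul_mul_assoc,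
    unipotentSum_mul_weylSum_sq]
  module

theorem whittakerElement_mul_unipotentSum_mul_torusSum_mul :
    z * (E * D * E) = (q * (q - 1) ^ 2) • (E * D * E) - (q * (q - 1) ^ 2) • (E * W * E) := by
  have hW : E * W * E * D * E = (q * (q - 1)) • (E * W * E) := by
    rw [mul_assoc _ E, unipotentSum_mul_torusSum, ← mul_assoc,
      mul_assoc _ W, weylSum_mul_torusSum, mul_assoc, charSum_mul_self]
    simp only [mul_smul_comm, smul_mul_assoc, smul_smul]
  simp only [← mul_assoc, whittakerElement_mul_unipotentSum, sub_mul, smul_mul_assoc, hW]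
  module

theorem aeval_whittakerElement_mul_unipotentSum :
    Polynomial.aeval z
      (Polynomial.X * (Polynomial.X - Polynomial.C ((q - 1) ^ 2 * (q + 1))) *
        (Polynomial.X - Polynomial.C (q * (q - 1) ^ 2))) *
      E = 0 := by
  have hE := whittakerElement_mul_unipotentSum (F := F) (k := k)
  have hW := whittakerElement_mul_unipotentSum_mul_weylSum_mul (F := F) (k := k)
  have hD := whittakerElement_mul_unipotentSum_mul_torusSum_mul (F := F) (k := k)
  generalize E * W * E = y at hE hW hD
  generalize E * D * E = t at hW hD
  have hsub (r : k) (x : MonoidAlgebra k (GL (Fin 2) F)) :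
      Polynomial.aeval z (Polynomial.X - Polynomial.C r) * x = z * x - r • x := by
    rw [map_sub, Polynomial.aeval_X, Polynomial.aeval_C, sub_mul, Algebra.smul_def]
  rw [map_mul, map_mul, Polynomial.aeval_X, mul_assoc, mul_assoc]
  simp only [hsub, mul_sub, mul_smul_comm, hE, hW, hD]
  module

theorem aeval_whittakerElement_nodal :
    Polynomial.aeval z (Lagrange.nodal Finset.univ (whittakerEigenvalue F k)) = 0 := by
  have hq : q ≠ 0 := Nat.cast_ne_zero.mpr Fintype.card_ne_zero
  have hq' : q - 1 ≠ 0 := card_sub_one_ne_zero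
  have h := congrArg (conjSum k (GL (Fin 2) F))
    (aeval_whittakerElement_mul_unipotentSum (F := F) (k := k))
  have hT : conjSum k (GL (Fin 2) F) E =
      -(q * (q - 1)) • Polynomial.aeval z
        (Polynomial.X - Polynomial.C (whittakerEigenvalue F k 3)) := by
    rw [conjSum_unipotentSum, card_GL_two, map_sub, Polynomial.aeval_X, Polynomial.aeval_C,
      Algebra.algebraMap_eq_smul_one, whittakerEigenvalue]
    simp only [Matrix.cons_val]
    module
  have hcenter (p : Polynomial k) : Polynomial.aeval z p ∈
      Subalgebra.center k (MonoidAlgebra k (GL (Fin 2) F)) :=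
    Algebra.adjoin_le (Set.singleton_subset_iff.mpr whittakerElement_mem_center)
      (Polynomial.aeval_mem_adjoin_singleton k _)
  -- Applying `conjSum` to the cubic relation on `E` adds the factor for the fourth eigenvalue.
  rw [conjSum_center_mul (hcenter _), hT, mul_smul_comm, ← map_mul, map_zero] at h
  have := (smul_eq_zero.mp h).resolve_left (neg_ne_zero.mpr (mul_ne_zero hq hq'))
  simpa [Lagrange.nodal, Fin.prod_univ_four, whittakerEigenvalue] using this

end MinimalPolynomial

section Coeff

open MonoidAlgebra

variable {F k : Type*} [Field F] [Fintype F] [DecidableEq F] [Field k] [CharZero k]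

local notation "q" => (Fintype.card F : k)
local notation "E" => unipotentSum F k
local notation "z" => whittakerElement F k

theorem card_mul_coeff_whittakerElement_pow_mul_unipotentSum {c : GL (Fin 2) F}
    (hc : c ∈ Subgroup.center (GL (Fin 2) F)) (i : ℕ) :
    (Nat.card (GL (Fin 2) F) : k) * (z ^ i * E).coeff c =
      q * (Nat.card (GL (Fin 2) F) * (z ^ i).coeff c -
        (q - 1) * (z ^ (i + 1)).coeff c) := by
  rw [← coeff_conjSum_of_mem_center hc, conjSum_center_mul (pow_mem whittakerElement_mem_center i),
    conjSum_unipotentSum, mul_sub, mul_smul_comm, mul_smul_comm, mul_one, ← pow_succ, coeff_sub,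
    coeff_smul, coeff_smul, Finsupp.sub_apply, Finsupp.smul_apply, Finsupp.smul_apply, smul_eq_mul,
    smul_eq_mul]
  ring

theorem coeff_neg_one_whittakerElement_mul_unipotentSum (hF : ringChar F ≠ 2) :
    (z * E).coeff (-1) = 0 := by
  rw [whittakerElement_mul_unipotentSum]
  simp [coeff_neg_one_unipotentSum hF, coeff_neg_one_unipotentSum_mul_weylSum_mul]

theorem coeff_neg_one_whittakerElement_sq_mul_unipotentSum (hF : ringChar F ≠ 2) :
    (z ^ 2 * E).coeff (-1) = q * (q - 1) ^ 3 := by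
  rw [sq, mul_assoc, whittakerElement_mul_unipotentSum, mul_sub, mul_smul_comm, mul_smul_comm,
    whittakerElement_mul_unipotentSum_mul_weylSum_mul, whittakerElement_mul_unipotentSum]
  simp only [coeff_sub, coeff_smul, Finsupp.sub_apply, Finsupp.smul_apply, smul_eq_mul,
    coeff_neg_one_unipotentSum hF, coeff_neg_one_unipotentSum_mul_weylSum_mul,
    coeff_neg_one_unipotentSum_mul_torusSum_mul]
  ring

theorem coeff_neg_one_whittakerElement_pow (hF : ringChar F ≠ 2) {i : ℕ} (hi : i < 3) :
    (z ^ i).coeff (-1) = 0 := by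
  have hq : q ≠ 0 := Nat.cast_ne_zero.mpr Fintype.card_ne_zero
  have hsucc {j : ℕ} (h : (z ^ j).coeff (-1) = 0) (hE : (z ^ j * E).coeff (-1) = 0) :
      (z ^ (j + 1)).coeff (-1) = 0 := by
    have hj := card_mul_coeff_whittakerElement_pow_mul_unipotentSum (k := k)
      (neg_one_mem_center (F := F)) j
    rw [h, hE, mul_zero, zero_sub, mul_neg, ← mul_assoc, zero_eq_neg] at hj
    exact (mul_eq_zero.mp hj).resolve_left (mul_ne_zero hq card_sub_one_ne_zero)
  have h₀ : (z ^ 0).coeff (-1) = 0 := by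
    have hne : (-1 : GL (Fin 2) F) ≠ 1 := fun h =>
      Ring.neg_one_ne_one_of_char_ne_two hF <| by
        simpa using congrArg (fun g : GL (Fin 2) F => g 0 0) h
    classical rw [pow_zero, one_def, coeff_single, Finsupp.single_apply, if_neg hne.symm]
  have h₁ := hsucc h₀ (by rw [pow_zero, one_mul, coeff_neg_one_unipotentSum hF])
  have h₂ := hsucc h₁ (by
    rw [zero_add, pow_one, coeff_neg_one_whittakerElement_mul_unipotentSum hF])
  interval_cases i <;> assumption

theorem coeff_neg_one_whittakerElement_pow_three (hF : ringChar F ≠ 2) :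
    (z ^ 3).coeff (-1) = -(Nat.card (GL (Fin 2) F) * (q - 1) ^ 2 : k) := by
  have h := card_mul_coeff_whittakerElement_pow_mul_unipotentSum (k := k)
    (neg_one_mem_center (F := F)) 2
  rw [coeff_neg_one_whittakerElement_sq_mul_unipotentSum hF,
    coeff_neg_one_whittakerElement_pow hF (by simp)] at h
  have hq : q ≠ 0 := Nat.cast_ne_zero.mpr Fintype.card_ne_zero
  refine mul_left_cancel₀ (mul_ne_zero hq (card_sub_one_ne_zero (F := F))) ?_
  linear_combination h

theorem coeff_neg_one_whittakerElement_pow_succ (hF : ringChar F ≠ 2) (m : ℕ) :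
    (z ^ (m + 1)).coeff (-1) = Nat.card (GL (Fin 2) F) *
      (whittakerEigenvalue F k 1 ^ m / (q ^ 2 - 1) -
        whittakerEigenvalue F k 2 ^ m / (2 * q * (q - 1)) -
        whittakerEigenvalue F k 3 ^ m / (2 * q * (q + 1))) := by
  let L : MonoidAlgebra k (GL (Fin 2) F) →ₗ[k] k :=
    Finsupp.lapply (-1) ∘ₗ (coeffLinearEquiv k).toLinearMap
  have h := linearMap_aeval_eq_mul_sum whittakerEigenvalue_injective.injOn
    aeval_whittakerElement_nodal L
    (fun i hi => coeff_neg_one_whittakerElement_pow hF hi) (Polynomial.X ^ (m + 1))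
  simp only [map_pow, Polynomial.aeval_X, Polynomial.eval_pow, Polynomial.eval_X,
    sum_whittakerEigenvalue_pow_div_prod] at h
  refine h.trans ?_
  change (z ^ 3).coeff (-1) * _ = _
  rw [coeff_neg_one_whittakerElement_pow_three hF]
  field_simp [card_sub_one_ne_zero (F := F) (k := k)]
  ring

end Coeff

section Count

open MonoidAlgebra

variable {F : Type*} [Field F] [Fintype F]

local notation "q" => (Fintype.card F : ℂ)

theorem card_commutator_prod_eq_neg_one_eq_coeff_add [DecidableEq F] {g : ℕ} (hg : 1 ≤ g) :
    (Nat.card {p : (Fin g → GL (Fin 2) F) × (Fin g → GL (Fin 2) F) //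
      (List.ofFn fun i => p.1 i * p.2 i * (p.1 i)⁻¹ * (p.2 i)⁻¹).prod = -1} : ℂ) =
    (whittakerElement F ℂ ^ (2 * g)).coeff (-1) +
      Nat.card (GL (Fin 2) F) ^ (2 * g) / Nat.card (detKer F) := by
  have hdet : (-1 : GL (Fin 2) F) ∈ detKer F := by
    simp [MonoidHom.mem_ker, Units.ext_iff, Matrix.det_neg]
  rw [← coeff_commutatorSum_pow, commutatorSum_pow hg, coeff_add, coeff_smul,
    Finsupp.add_apply, Finsupp.smul_apply, coeff_subgroupSum hdet, smul_eq_mul, mul_one]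

theorem card_commutator_prod_eq_neg_one (hF : ringChar F ≠ 2) {g : ℕ} (hg : 1 ≤ g) :
    (Nat.card {p : (Fin g → GL (Fin 2) F) × (Fin g → GL (Fin 2) F) //
      (List.ofFn fun i => p.1 i * p.2 i * (p.1 i)⁻¹ * (p.2 i)⁻¹).prod = -1} : ℂ) =
      Nat.card (GL (Fin 2) F) / (q - 1) * (q - 1) ^ (2 * g) *
        ((q ^ 2 - 1) ^ (2 * g - 2) +
          q ^ (2 * g - 2) * (q ^ 2 - 1) ^ (2 * g - 2) -
          1 / 2 * q ^ (2 * g - 2) * (q - 1) ^ (2 * g - 2) -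
          1 / 2 * q ^ (2 * g - 2) * (q + 1) ^ (2 * g - 2)) := by
  classical
  have hq : q ≠ 0 := Nat.cast_ne_zero.mpr Fintype.card_ne_zero
  have hq' : q - 1 ≠ 0 := card_sub_one_ne_zero
  have hq'' : q + 1 ≠ 0 := Nat.cast_add_one_ne_zero _
  have hcard : (Nat.card (detKer F) : ℂ) = Nat.card (GL (Fin 2) F) / (q - 1) := by
    rw [card_GL_two_eq_mul_card_detKer, mul_div_cancel_left₀ _ hq']
  have hsq : q ^ 2 - 1 = (q - 1) * (q + 1) := by ring
  obtain ⟨m, rfl⟩ := Nat.exists_eq_add_of_le' hg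
  rw [card_commutator_prod_eq_neg_one_eq_coeff_add hg, mul_add_one 2 m, Nat.add_sub_cancel,
    coeff_neg_one_whittakerElement_pow_succ hF, hcard, card_GL_two, hsq]
  simp only [whittakerEigenvalue, Matrix.cons_val, mul_pow]
  generalize q - 1 = r at *
  generalize q + 1 = s at *
  field_simp
  ring

end Count

/-- For `g ≥ 1` and every finite field `F_q` of odd cardinality `q`,
the number of `2g`-tuples in `GL(2,F_q)^{2g}` with `[A₁,B₁]⋯[A_g,B_g] = −I₂` equals
`(|GL(2,F_q)|/(q−1)) · (q−1)^{2g} · [ (q²−1)^{2g−2} + q^{2g−2}(q²−1)^{2g−2}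
  − ½·q^{2g−2}(q−1)^{2g−2} − ½·q^{2g−2}(q+1)^{2g−2} ]`. -/
theorem statement14 (g : ℕ) (hg : 1 ≤ g) (F : Type) [Field F] [Fintype F]
    (hodd : Odd (Fintype.card F)) :
    (Nat.card {p : (Fin g → GL (Fin 2) F) × (Fin g → GL (Fin 2) F) //
        (↑((List.ofFn fun i => p.1 i * p.2 i * (p.1 i)⁻¹ * (p.2 i)⁻¹).prod) :
          Matrix (Fin 2) (Fin 2) F) = (-1 : Matrix (Fin 2) (Fin 2) F)} : ℚ)
      = (Nat.card (GL (Fin 2) F) : ℚ) / ((Fintype.card F : ℚ) - 1)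
          * ((Fintype.card F : ℚ) - 1) ^ (2 * g)
          * (((Fintype.card F : ℚ) ^ 2 - 1) ^ (2 * g - 2)
            + (Fintype.card F : ℚ) ^ (2 * g - 2) * ((Fintype.card F : ℚ) ^ 2 - 1) ^ (2 * g - 2)
            - (1 / 2) * (Fintype.card F : ℚ) ^ (2 * g - 2) * ((Fintype.card F : ℚ) - 1) ^ (2 * g - 2)
            - (1 / 2) * (Fintype.card F : ℚ) ^ (2 * g - 2) * ((Fintype.card F : ℚ) + 1) ^ (2 * g - 2)) := by
  have hF : ringChar F ≠ 2 := fun h =>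
    Nat.not_even_iff_odd.mpr hodd (Nat.even_iff.mpr (FiniteField.even_card_of_char_two h))
  have hcount := card_commutator_prod_eq_neg_one hF hg
  simp only [← Units.val_inj, Units.val_neg, Units.val_one] at hcount
  apply Rat.cast_injective (α := ℂ)
  push_cast
  exact hcount
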